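/- Let X be an edge-transitive simplicial surface such that Aut(X) has exactly two orbits on the faces X_2. Then every vertex of X has even degree. -/

import Mathlib

open Finset

/-- A (connected) simplicial surface: a finite, downward-closed family of nonempty subsets of
the vertex set `α`, pure of dimension 2, such that every edge lies in exactly two faces,
the faces around each vertex form an umbrella, and the surface is connected. -/
structure SimplicialSurface (α : Type*) [Fintype α] [DecidableEq α] where
  cplx : Finset (Finset α)
  nonempty_of_mem : ∀ s ∈ cplx, s.Nonempty
  down_closed : ∀ s ∈ cplx, ∀ t : Finset α, t.Nonempty → t ⊆ s → t ∈ cplx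
  card_le_three : ∀ s ∈ cplx, s.card ≤ 3
  pure_two : ∀ s ∈ cplx, ∃ F ∈ cplx, s ⊆ F ∧ F.card = 3
  dim_two : ∃ F ∈ cplx, F.card = 3
  all_vertices : ∀ x : α, {x} ∈ cplx
  edge_in_two_faces : ∀ e ∈ cplx, e.card = 2 →
    (cplx.filter (fun F => e ⊆ F ∧ F.card = 3)).card = 2
  umbrella_exists : ∀ v : α, ∃ n : ℕ, 0 < n ∧ ∃ u : Fin n → Finset α,
    Function.Injective u ∧
    (∀ i, u i ∈ cplx ∧ (u i).card = 3 ∧ v ∈ u i) ∧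
    (∀ F ∈ cplx, F.card = 3 → v ∈ F → ∃ i, u i = F) ∧
    (∀ i : Fin n, (u i ∩ u (finRotate n i)).card = 2)
  connected : ∀ F ∈ cplx, ∀ G ∈ cplx, F.card = 3 → G.card = 3 →
    Relation.ReflTransGen (fun A B => A ∈ cplx ∧ B ∈ cplx ∧ (A ∩ B).card = 2) F G

lemma Equiv.Perm.finset_image_mul {α : Type*} [DecidableEq α] (π σ : Equiv.Perm α)
    (s : Finset α) :
    Finset.image ⇑(π * σ) s = Finset.image ⇑π (Finset.image ⇑σ s) := by
  rw [Finset.image_image]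
  rfl

namespace SimplicialSurface

variable {α : Type*} [Fintype α] [DecidableEq α] (X : SimplicialSurface α)

/-- The set `X_2` of faces of `X`, i.e. the 3-element members. -/
def faces : Finset (Finset α) := X.cplx.filter fun s => s.card = 3

/-- The set `X_1` of edges of `X`, i.e. the 2-element members. -/
def edges : Finset (Finset α) := X.cplx.filter fun s => s.card = 2

/-- The automorphism group of `X`: permutations of the vertices mapping members of the
complex to members of the complex. -/
def aut : Subgroup (Equiv.Perm α) where
  carrier := { π | ∀ s : Finset α, s ∈ X.cplx ↔ Finset.image ⇑π s ∈ X.cplx }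
  one_mem' := by intro s; simp
  mul_mem' := by
    intro π σ hπ hσ s
    rw [Equiv.Perm.finset_image_mul, ← hπ (Finset.image ⇑σ s), ← hσ s]
  inv_mem' := by
    intro π hπ s
    have h2 : Finset.image ⇑π (Finset.image ⇑π⁻¹ s) = s := by ext x; simp
    have h := hπ (Finset.image ⇑π⁻¹ s)
    rw [h2] at h
    exact h.symm

/-- The setwise stabiliser in `Aut(X)` of a set `s` of vertices. -/
def stab (s : Finset α) : Subgroup (Equiv.Perm α) where
  carrier := { π | π ∈ X.aut ∧ Finset.image ⇑π s = s }
  one_mem' := ⟨X.aut.one_mem, by simp⟩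
  mul_mem' := by
    rintro π σ ⟨hπ, hπs⟩ ⟨hσ, hσs⟩
    exact ⟨X.aut.mul_mem hπ hσ, by rw [Equiv.Perm.finset_image_mul, hσs, hπs]⟩
  inv_mem' := by
    rintro π ⟨hπ, hπs⟩
    refine ⟨X.aut.inv_mem hπ, ?_⟩
    calc Finset.image ⇑π⁻¹ s = Finset.image ⇑π⁻¹ (Finset.image ⇑π s) := by rw [hπs]
      _ = s := by ext x; simp

/-- `X` is edge-transitive if `Aut(X)` acts transitively on the edges `X_1`. -/
def EdgeTransitive : Prop :=
  ∀ e₁ ∈ X.edges, ∀ e₂ ∈ X.edges, ∃ π ∈ X.aut, Finset.image ⇑π e₁ = e₂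

/-- The orbit of a set of vertices under `Aut(X)`. -/
def orbit (s : Finset α) : Set (Finset α) := { t | ∃ π ∈ X.aut, Finset.image ⇑π s = t }

/-- The set of `Aut(X)`-orbits on the faces of `X`. -/
def faceOrbits : Set (Set (Finset α)) := { O | ∃ F ∈ X.faces, O = X.orbit F }

/-- The set of `Aut(X)`-orbits on the vertices of `X`. -/
def vertexOrbits : Set (Set α) := { O | ∃ v : α, O = { w | ∃ π ∈ X.aut, π v = w } }

/-- The degree of a vertex: the number of faces containing it. -/
def degree (v : α) : ℕ := (X.faces.filter fun F => v ∈ F).card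

end SimplicialSurface

/-!
Every edge of an edge-transitive surface can be moved to the edge between two given adjacent faces
`F` and `G`, so every face can be moved to `F` or to `G`. If there are two orbits of faces, adjacent
faces therefore lie in different orbits: the orbits properly 2-colour the dual graph. Going around
the umbrella of a vertex the colours alternate, so the umbrella has even length.
-/

theorem even_natCard_of_perm_iff_not {ι : Type*} [Finite ι] (σ : Equiv.Perm ι) {p : ι → Prop}
    (h : ∀ i, p i ↔ ¬ p (σ i)) : Even (Nat.card ι) := by
  classical
  have halves : Nat.card {i // p i} = Nat.card {i // ¬ p i} :=
    Nat.card_congr (σ.subtypeEquiv h)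
  rw [← Nat.card_congr (Equiv.sumCompl p), Nat.card_sum, ← halves]
  exact Even.add_self _

theorem even_natCard_of_perm_adj {V ι : Type*} [Finite ι] {G : SimpleGraph V}
    (hG : G.Colorable 2) (f : ι → V) (σ : Equiv.Perm ι) (h : ∀ i, G.Adj (f i) (f (σ i))) :
    Even (Nat.card ι) := by
  obtain ⟨c⟩ := hG
  have colour_ne (i : ι) : c (f i) ≠ c (f (σ i)) := c.valid (h i)
  exact even_natCard_of_perm_iff_not σ (p := fun i => c (f i) = 0) fun i => by
    have := colour_ne i
    lia

namespace SimplicialSurface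

variable {α : Type*} [Fintype α] [DecidableEq α] {X : SimplicialSurface α}

theorem mem_faces {F : Finset α} : F ∈ X.faces ↔ F ∈ X.cplx ∧ F.card = 3 :=
  Finset.mem_filter

theorem mem_edges {e : Finset α} : e ∈ X.edges ↔ e ∈ X.cplx ∧ e.card = 2 :=
  Finset.mem_filter

theorem mem_edges_of_subset {s e : Finset α} (hs : s ∈ X.cplx) (hes : e ⊆ s)
    (he : e.card = 2) : e ∈ X.edges :=
  mem_edges.2 ⟨X.down_closed s hs e (Finset.card_pos.1 (by lia)) hes, he⟩

theorem exists_edge_subset {F : Finset α} (hF : F ∈ X.faces) : ∃ e ∈ X.edges, e ⊆ F := by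
  obtain ⟨hFX, hF3⟩ := mem_faces.1 hF
  obtain ⟨e, heF, he⟩ := Finset.exists_subset_card_eq (s := F) (n := 2) (by lia)
  exact ⟨e, mem_edges_of_subset hFX heF he, heF⟩

theorem image_mem_faces {π : Equiv.Perm α} (hπ : π ∈ X.aut) {F : Finset α}
    (hF : F ∈ X.faces) : F.image π ∈ X.faces := by
  obtain ⟨hFX, hF3⟩ := mem_faces.1 hF
  exact mem_faces.2 ⟨(hπ F).1 hFX, by rw [Finset.card_image_of_injective _ π.injective, hF3]⟩

theorem orbit_image {π : Equiv.Perm α} (hπ : π ∈ X.aut) (s : Finset α) :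
    X.orbit (s.image π) = X.orbit s := by
  ext t
  constructor
  · rintro ⟨σ, hσ, rfl⟩
    exact ⟨σ * π, X.aut.mul_mem hσ hπ, Equiv.Perm.finset_image_mul σ π s⟩
  · rintro ⟨σ, hσ, rfl⟩
    refine ⟨σ * π⁻¹, X.aut.mul_mem hσ (X.aut.inv_mem hπ), ?_⟩
    rw [← Equiv.Perm.finset_image_mul, inv_mul_cancel_right]

variable (X) in
/-- The dual graph of the surface: its vertices are the faces of `X`, two of them being adjacent
when they share an edge. -/
def faceGraph : SimpleGraph X.faces where
  Adj F G := (F.1 ∩ G.1).card = 2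
  symm := ⟨fun F G h => by rwa [Finset.inter_comm]⟩
  loopless := ⟨fun F h => by
    rw [Finset.inter_self, (mem_faces.1 F.2).2] at h
    lia⟩

theorem eq_or_eq_of_faceGraph_adj {F G H : X.faces} (hFG : X.faceGraph.Adj F G)
    (hH : F.1 ∩ G.1 ⊆ H.1) : H = F ∨ H = G := by
  obtain ⟨hFX, hF3⟩ := mem_faces.1 F.2
  obtain ⟨hGX, hG3⟩ := mem_faces.1 G.2
  obtain ⟨hHX, hH3⟩ := mem_faces.1 H.2
  obtain ⟨heX, he⟩ := mem_edges.1 (mem_edges_of_subset hFX Finset.inter_subset_left hFG)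
  have hFGsub : {F.1, G.1} ⊆ X.cplx.filter fun K => F.1 ∩ G.1 ⊆ K ∧ K.card = 3 := by
    simp [Finset.insert_subset_iff, hFX, hF3, hGX, hG3]
  have hFG_eq := Finset.eq_of_subset_of_card_le hFGsub <| by
    rw [X.edge_in_two_faces _ heX he, Finset.card_pair (Subtype.coe_ne_coe.2 hFG.ne)]
  have hHmem : H.1 ∈ ({F.1, G.1} : Finset (Finset α)) := by
    rw [hFG_eq]
    exact Finset.mem_filter.2 ⟨hHX, hH, hH3⟩
  rw [Finset.mem_insert, Finset.mem_singleton] at hHmem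
  exact hHmem.imp Subtype.ext Subtype.ext

theorem EdgeTransitive.faceOrbits_subset (hX : X.EdgeTransitive) {F G : X.faces}
    (hFG : X.faceGraph.Adj F G) : X.faceOrbits ⊆ {X.orbit F, X.orbit G} := by
  rintro _ ⟨H, hH, rfl⟩
  obtain ⟨e, he, heH⟩ := exists_edge_subset hH
  have hFG_edge : F.1 ∩ G.1 ∈ X.edges :=
    mem_edges_of_subset (mem_faces.1 F.2).1 Finset.inter_subset_left hFG
  obtain ⟨π, hπ, hπe⟩ := hX e he _ hFG_edge
  have hπH : F.1 ∩ G.1 ⊆ H.image π := hπe ▸ Finset.image_subset_image heH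
  rw [← orbit_image hπ H]
  rcases eq_or_eq_of_faceGraph_adj (H := ⟨_, image_mem_faces hπ hH⟩) hFG hπH with h | h
  · exact .inl (congrArg (fun K : X.faces => X.orbit K) h)
  · exact .inr (congrArg (fun K : X.faces => X.orbit K) h)

theorem EdgeTransitive.orbit_ne_of_adj (hX : X.EdgeTransitive) (h : 1 < X.faceOrbits.ncard)
    {F G : X.faces} (hFG : X.faceGraph.Adj F G) : X.orbit F ≠ X.orbit G := by
  intro horbit
  have hsub : X.faceOrbits ⊆ {X.orbit F} := by
    simpa [← horbit] using hX.faceOrbits_subset hFG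
  have := Set.ncard_le_ncard hsub
  rw [Set.ncard_singleton] at this
  lia

theorem EdgeTransitive.faceGraph_colorable (hX : X.EdgeTransitive)
    (h : 1 < X.faceOrbits.ncard) : X.faceGraph.Colorable X.faceOrbits.ncard := by
  have := Fintype.ofFinite X.faceOrbits
  let c : X.faceGraph.Coloring X.faceOrbits :=
    .mk (fun F => ⟨X.orbit F, F, F.2, rfl⟩) fun hFG horbit =>
      hX.orbit_ne_of_adj h hFG (congrArg Subtype.val horbit)
  rw [← Nat.card_coe_set_eq, Nat.card_eq_fintype_card]
  exact c.colorable

theorem natCard_faces_mem (v : α) : Nat.card {F : X.faces // v ∈ F.1} = X.degree v := by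
  rw [Nat.card_congr (Equiv.subtypeSubtypeEquivSubtypeInter (· ∈ X.faces) (v ∈ ·))]
  exact Nat.subtype_card _ fun F => Finset.mem_filter

variable (X) in
theorem exists_perm_faces_mem_adj (v : α) :
    ∃ σ : Equiv.Perm {F : X.faces // v ∈ F.1}, ∀ F, X.faceGraph.Adj F.1 (σ F).1 := by
  obtain ⟨n, -, u, hinj, hu, hsurj, hadj⟩ := X.umbrella_exists v
  let w (i : Fin n) : {F : X.faces // v ∈ F.1} :=
    ⟨⟨u i, mem_faces.2 ⟨(hu i).1, (hu i).2.1⟩⟩, (hu i).2.2⟩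
  have hw : Function.Bijective w := by
    refine ⟨fun i j hij => hinj (congrArg (·.1.1) hij), fun ⟨⟨F, hF⟩, hvF⟩ => ?_⟩
    obtain ⟨hFX, hF3⟩ := mem_faces.1 hF
    obtain ⟨i, rfl⟩ := hsurj F hFX hF3 hvF
    exact ⟨i, rfl⟩
  let e := Equiv.ofBijective w hw
  refine ⟨e.permCongr (finRotate n), e.surjective.forall.2 fun i => ?_⟩
  rw [Equiv.permCongr_apply, Equiv.symm_apply_apply]
  exact hadj i

theorem even_degree_of_faceGraph_colorable (h : X.faceGraph.Colorable 2) (v : α) :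
    Even (X.degree v) := by
  obtain ⟨σ, hσ⟩ := X.exists_perm_faces_mem_adj v
  rw [← natCard_faces_mem]
  exact even_natCard_of_perm_adj h Subtype.val σ hσ

end SimplicialSurface

/-- Let `X` be an edge-transitive simplicial surface such that `Aut(X)` has exactly two
orbits on the faces. Then every vertex of `X` has even degree. -/
theorem degree_even
    {α : Type*} [Fintype α] [DecidableEq α] (X : SimplicialSurface α)
    (hX : X.EdgeTransitive) (h2 : X.faceOrbits.ncard = 2) (v : α) :
    Even (X.degree v) := by
  have hcol : X.faceGraph.Colorable 2 := h2 ▸ hX.faceGraph_colorable (by lia)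
  exact SimplicialSurface.even_degree_of_faceGraph_colorable hcol v
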